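/- arXiv:2602.19434 — 2 statements merged into one kernel-verified Lean document; each statement's English description precedes it below -/
import Mathlib

section
/- There exists a universal constant C < ∞ (independent of n and d) such that for all integers n ≥ 8, d ≥ 3 and every function f : [2^n]^d → ℝ, one has Σ_{k=8}^n E[|∫ f dν_k|] ≤ C·‖f‖_{W^{1,1}}. -/
open MeasureTheory Finset

noncomputable section

/-- Points of the grid `[2^n]^d` (coordinates taken 0-based). -/
abbrev GridPt (n d : ℕ) := Fin d → Fin (2^n)

/-- Normalized counting "volume" of a subset of the grid: `Vol(A) = 2^{-nd}|A|`. -/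
def Vol (n d : ℕ) (A : Finset (GridPt n d)) : ℝ := (A.card : ℝ) / 2^(n*d)

/-- The ℓ1 metric on the grid. -/
def gdist {n d : ℕ} (u v : GridPt n d) : ℝ := ∑ i, |((u i : ℕ) : ℝ) - ((v i : ℕ) : ℝ)|

/-- Indices of the dyadic cubes in `D_k`. -/
abbrev CubeIdx (d k : ℕ) := Fin d → Fin (2^k)

/-- The dyadic cube of side-cardinality `2^(n-k)` indexed by `j ∈ {0,…,2^k-1}^d`. -/
def cube (n d k : ℕ) (j : CubeIdx d k) : Finset (GridPt n d) :=
  Finset.univ.filter (fun x => ∀ i, (x i : ℕ) / 2^(n-k) = (j i : ℕ))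

/-- `p = 2^{-4d}`. -/
def pp (d : ℕ) : ℝ := ((2:ℝ)^(4*d))⁻¹

/-- The law of each `X_Q`: takes values `±1` with probability `p/2` each
and `0` with probability `1-p`. -/
def stepMeasure (d : ℕ) : Measure ℝ :=
  (Real.toNNReal (pp d / 2)) • Measure.dirac (1:ℝ)
  + (Real.toNNReal (pp d / 2)) • Measure.dirac (-1:ℝ)
  + (Real.toNNReal (1 - pp d)) • Measure.dirac (0:ℝ)

instance (d : ℕ) : IsFiniteMeasure (stepMeasure d) := by
  unfold stepMeasure; infer_instance

/-- The joint law of the i.i.d. family `{X_Q}_{Q ∈ D_k}`; a sample point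
`ω : CubeIdx d k → ℝ` records the values `X_Q = ω Q`. -/
def prodMeasure (d k : ℕ) : Measure (CubeIdx d k → ℝ) :=
  Measure.pi fun _ => stepMeasure d

/-- `μ_k(A) = ∑_{Q ∈ D_k} p⁻¹ 2^k X_Q Vol(A ∩ Q)`, as a function of the sample point `ω`. -/
def muMeas (n d k : ℕ) (A : Finset (GridPt n d)) (ω : CubeIdx d k → ℝ) : ℝ :=
  ∑ j : CubeIdx d k, (pp d)⁻¹ * 2^k * ω j * Vol n d (A ∩ cube n d k j)

/-- `ν_k(A) = μ_k(A) - μ_k([2^n]^d)·Vol(A)`. -/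
def nuMeas (n d k : ℕ) (A : Finset (GridPt n d)) (ω : CubeIdx d k → ℝ) : ℝ :=
  muMeas n d k A ω - muMeas n d k Finset.univ ω * Vol n d A

/-- Ordered edges of the grid graph (each unordered edge `{u, u+e_i}` listed exactly once,
in the increasing direction). -/
def edgePairs (n d : ℕ) : Finset (GridPt n d × GridPt n d) :=
  Finset.univ.filter (fun e =>
    ∃ i, ((e.2 i : ℕ) = (e.1 i : ℕ) + 1) ∧ ∀ j, j ≠ i → e.2 j = e.1 j)

/-- The `(1,1)`-Sobolev seminorm `‖f‖_{W^{1,1}}`. -/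
def W11 (n d : ℕ) (f : GridPt n d → ℝ) : ℝ :=
  (1 / ((edgePairs n d).card : ℝ)) * ∑ e ∈ edgePairs n d, 2^n * |f e.2 - f e.1|

/-!
The functional `f ↦ ∑ k, E|∫ f dν_k|` is a seminorm which vanishes on constants, and the total
variation is additive along the superlevel sets of `f`, so it suffices to treat indicators of sets
`A`, where by complementation `Vol A = r ^ d ≤ 1 / 2`. Slicing shows
`Vol A * (r⁻¹ - 1) ≤ ‖1_A‖_{W^{1,1}}`. On the other side, `ν_k(A)` is a linear combination of
independent variables, so `E|ν_k(A)|` is at most `2 ^ (k + 1) * Vol A` by the triangle inequality,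
and by the second moment it decays geometrically in `k` as soon as the side `2 ^ (-k)` of the cubes
is smaller than `r / 16`. For `d ≥ 3` the sum over `k` is therefore of order `Vol A / r`, which
settles `r ≤ 1 / 2`. For larger `r` all scales `k ≥ 8` lie in the decaying regime, and what they
contribute is exponentially small in `d`, whereas `r⁻¹ - 1 ≥ 1 / (2 * d)`.
-/

/-! ### Edge isoperimetry in the grid -/

/-- The edges of the grid with exactly one endpoint in `A`. -/
def edgeBoundary {n d : ℕ} (A : Finset (GridPt n d)) : Finset (GridPt n d × GridPt n d) :=
  {e ∈ edgePairs n d | ¬(e.1 ∈ A ↔ e.2 ∈ A)}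

/-- The section `{y | (t, y) ∈ A}` of a set of tuples at first coordinate `t`. -/
def sliceAt {α : Type*} [DecidableEq α] {d : ℕ} (A : Finset (Fin (d + 1) → α)) (t : α) :
    Finset (Fin d → α) :=
  {x ∈ A | x 0 = t}.image Fin.tail

section Slice

variable {α : Type*} [DecidableEq α] {d : ℕ}

lemma mem_sliceAt {A : Finset (Fin (d + 1) → α)} {t : α} {y : Fin d → α} :
    y ∈ sliceAt A t ↔ (Fin.cons t y : Fin (d + 1) → α) ∈ A := by
  simp only [sliceAt, mem_image, mem_filter]
  constructor
  · rintro ⟨x, ⟨hx, rfl⟩, rfl⟩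
    rwa [Fin.cons_self_tail]
  · exact fun h => ⟨_, ⟨h, Fin.cons_zero ..⟩, Fin.tail_cons ..⟩

lemma sum_card_sliceAt [Fintype α] (A : Finset (Fin (d + 1) → α)) :
    ∑ t, #(sliceAt A t) = #A := by
  rw [card_eq_sum_card_fiberwise (f := fun x => x 0) (t := univ) fun _ _ => mem_coe.2 (mem_univ _)]
  refine sum_congr rfl fun t _ => card_image_of_injOn fun x hx y hy hxy => ?_
  simp only [coe_filter, Set.mem_ofPred_eq] at hx hy
  rw [← Fin.cons_self_tail x, ← Fin.cons_self_tail y, hx.2, hy.2, hxy]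

end Slice

lemma mem_edgePairs {n d : ℕ} {e : GridPt n d × GridPt n d} :
    e ∈ edgePairs n d ↔ ∃ i, (e.2 i : ℕ) = (e.1 i : ℕ) + 1 ∧ ∀ j, j ≠ i → e.2 j = e.1 j := by
  simp only [edgePairs, mem_filter, mem_univ, true_and]

lemma cons_mem_edgePairs_left {n d : ℕ} {t u : Fin (2 ^ n)} (h : (u : ℕ) = t + 1)
    (y : GridPt n d) :
    ((Fin.cons t y, Fin.cons u y) : GridPt n (d + 1) × GridPt n (d + 1)) ∈ edgePairs n (d + 1) :=
  mem_edgePairs.2 ⟨0, h, Fin.cases (absurd rfl) fun _ _ => rfl⟩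

lemma cons_mem_edgePairs_right {n d : ℕ} (t : Fin (2 ^ n)) {e : GridPt n d × GridPt n d}
    (he : e ∈ edgePairs n d) :
    ((Fin.cons t e.1, Fin.cons t e.2) : GridPt n (d + 1) × GridPt n (d + 1)) ∈
      edgePairs n (d + 1) := by
  obtain ⟨i, hi, hj⟩ := mem_edgePairs.1 he
  refine mem_edgePairs.2 ⟨i.succ, hi, Fin.cases (fun _ => rfl) fun j hji => hj j ?_⟩
  exact fun h => hji (congrArg Fin.succ h)

lemma sum_card_edgeBoundary_sliceAt_le {n d : ℕ} (A : Finset (GridPt n (d + 1))) :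
    ∑ t, #(edgeBoundary (sliceAt A t)) ≤ #{e ∈ edgeBoundary A | e.1 0 = e.2 0} := by
  rw [card_eq_sum_card_fiberwise (f := fun e => e.1 0) (t := univ)
    fun _ _ => mem_coe.2 (mem_univ _)]
  refine sum_le_sum fun t _ => card_le_card_of_injOn
    (fun e => ((Fin.cons t e.1, Fin.cons t e.2) : GridPt n (d + 1) × GridPt n (d + 1))) ?_ ?_
  · intro e he
    simp only [edgeBoundary, mem_coe, mem_filter, mem_sliceAt] at he
    simp only [edgeBoundary, mem_coe, mem_filter, Fin.cons_zero, and_true]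
    exact ⟨cons_mem_edgePairs_right t he.1, he.2⟩
  · intro e _ e' _ h
    simp only [Prod.mk.injEq, Fin.cons_inj, true_and] at h
    exact Prod.ext h.1 h.2

lemma exists_consecutive_of_mem_of_notMem {N : ℕ} {S : Set (Fin N)} {a b : Fin N}
    (ha : a ∈ S) (hb : b ∉ S) : ∃ t u : Fin N, (u : ℕ) = t + 1 ∧ ¬(t ∈ S ↔ u ∈ S) := by
  obtain ⟨p⟩ := SimpleGraph.pathGraph_preconnected N a b
  obtain ⟨e, -, hfst, hsnd⟩ := p.exists_boundary_dart S ha hb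
  rcases SimpleGraph.pathGraph_adj.1 e.adj with h | h
  · exact ⟨e.fst, e.snd, h.symm, fun hiff => hsnd (hiff.1 hfst)⟩
  · exact ⟨e.snd, e.fst, h.symm, fun hiff => hsnd (hiff.2 hfst)⟩

/- The line over a point of `sliceAt A t \ sliceAt A u` enters and leaves `A`, so it contains a
boundary edge. -/
lemma card_sliceAt_le {n d : ℕ} (A : Finset (GridPt n (d + 1))) (t u : Fin (2 ^ n)) :
    #(sliceAt A t) ≤ #(sliceAt A u) + #{e ∈ edgeBoundary A | ¬e.1 0 = e.2 0} := by
  refine (card_le_card_sdiff_add_card (t := sliceAt A u)).trans ?_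
  rw [add_comm]
  gcongr
  refine card_le_card_of_surjOn (fun e => Fin.tail e.1) fun y hy => ?_
  simp only [coe_sdiff, Set.mem_sdiff, mem_coe, mem_sliceAt] at hy
  obtain ⟨a, b, hab, hcross⟩ := exists_consecutive_of_mem_of_notMem
    (S := {a | (Fin.cons a y : GridPt n (d + 1)) ∈ A}) hy.1 hy.2
  refine ⟨(Fin.cons a y, Fin.cons b y), ?_, rfl⟩
  simp only [edgeBoundary, mem_coe, mem_filter, Fin.cons_zero, Fin.ext_iff]
  exact ⟨⟨cons_mem_edgePairs_left hab y, hcross⟩, by omega⟩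

lemma two_pow_mul_card_sliceAt_le {n d : ℕ} (A : Finset (GridPt n (d + 1))) (t : Fin (2 ^ n)) :
    2 ^ n * #(sliceAt A t) ≤ #A + 2 ^ n * #{e ∈ edgeBoundary A | ¬e.1 0 = e.2 0} := by
  calc 2 ^ n * #(sliceAt A t) = ∑ _u : Fin (2 ^ n), #(sliceAt A t) := by simp
    _ ≤ ∑ u, (#(sliceAt A u) + #{e ∈ edgeBoundary A | ¬e.1 0 = e.2 0}) :=
      sum_le_sum fun u _ => card_sliceAt_le A t u
    _ = #A + 2 ^ n * #{e ∈ edgeBoundary A | ¬e.1 0 = e.2 0} := by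
      simp [sum_add_distrib, sum_card_sliceAt]

lemma sum_card_edgeBoundary_sliceAt_add_le {n d : ℕ} (A : Finset (GridPt n (d + 1)))
    (t : Fin (2 ^ n)) :
    ∑ u, (#(edgeBoundary (sliceAt A u)) : ℝ) + #(sliceAt A t) ≤
      #(edgeBoundary A) + #A * (2 ^ n : ℝ)⁻¹ := by
  have hpar : ∑ u, (#(edgeBoundary (sliceAt A u)) : ℝ) ≤
      #{e ∈ edgeBoundary A | e.1 0 = e.2 0} := mod_cast sum_card_edgeBoundary_sliceAt_le A
  have hperp : (2 ^ n : ℝ) * #(sliceAt A t) ≤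
      #A + 2 ^ n * #{e ∈ edgeBoundary A | ¬e.1 0 = e.2 0} :=
    mod_cast two_pow_mul_card_sliceAt_le A t
  have hsplit : (#{e ∈ edgeBoundary A | e.1 0 = e.2 0} : ℝ) +
      #{e ∈ edgeBoundary A | ¬e.1 0 = e.2 0} = #(edgeBoundary A) :=
    mod_cast card_filter_add_card_filter_not _
  have hslice : (#(sliceAt A t) : ℝ) ≤
      #A * (2 ^ n : ℝ)⁻¹ + #{e ∈ edgeBoundary A | ¬e.1 0 = e.2 0} := by
    field_simp
    linarith
  linarith

lemma succ_mul_inv_le {a l m : ℝ} {d : ℕ} (ha : 0 ≤ a) (hl : 0 < l) (hm : 0 < m)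
    (hal : a ≤ l ^ (d + 1)) : (d + 1) * a * l⁻¹ ≤ d * a * m⁻¹ + m ^ d := by
  have bernoulli : 1 + (d + 1 : ℝ) * (m / l - 1) ≤ (m / l) ^ (d + 1) := by
    have h := one_add_mul_le_pow (a := m / l - 1) (by linarith [div_pos hm hl]) (d + 1)
    rwa [add_sub_cancel, Nat.cast_succ] at h
  calc (d + 1) * a * l⁻¹ = a * m⁻¹ * (1 + (d + 1) * (m / l - 1)) + d * a * m⁻¹ := by
        field_simp
        ring
    _ ≤ a * m⁻¹ * (m / l) ^ (d + 1) + d * a * m⁻¹ := by gcongr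
    _ = a / l ^ (d + 1) * m ^ d + d * a * m⁻¹ := by
        rw [div_pow, pow_succ m]
        field_simp
    _ ≤ 1 * m ^ d + d * a * m⁻¹ := by
        gcongr
        exact (div_le_one (by positivity)).2 hal
    _ = d * a * m⁻¹ + m ^ d := by ring

lemma exists_pos_pow_eq_card {α : Type*} {d : ℕ} {A : Finset (Fin d → α)}
    (hA : A.Nonempty) : ∃ l : ℝ, 0 < l ∧ l ^ d = #A := by
  have hpos : (0 : ℝ) < #A := mod_cast hA.card_pos
  rcases eq_or_ne d 0 with rfl | hd
  · have h1 : #A = 1 := le_antisymm (card_le_one_of_subsingleton A) hA.card_pos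
    exact ⟨1, one_pos, by simp [h1]⟩
  · exact ⟨(#A : ℝ) ^ (d : ℝ)⁻¹, by positivity, Real.rpow_inv_natCast_pow hpos.le hd⟩

/- Induction on `d` by slicing: the edges inside the slices are counted by induction, and those
between slices are at least as many as the excess of the largest slice over the average one. -/
theorem mul_card_mul_le_card_edgeBoundary {n d : ℕ} (A : Finset (GridPt n d)) {l : ℝ} (hl : 0 < l)
    (hA : (#A : ℝ) ≤ l ^ d) : d * #A * (l⁻¹ - (2 ^ n)⁻¹) ≤ (#(edgeBoundary A) : ℝ) := by
  induction d generalizing l with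
  | zero => simp
  | succ d ih =>
    rcases A.eq_empty_or_nonempty with rfl | ⟨x, hx⟩
    · simp
    obtain ⟨t, -, ht⟩ := exists_max_image univ (fun u => #(sliceAt A u)) ⟨x 0, mem_univ _⟩
    have hslice : (sliceAt A t).Nonempty := card_pos.1 <|
      (card_pos.2 ⟨Fin.tail x, mem_sliceAt.2 (by rwa [Fin.cons_self_tail])⟩).trans_le
        (ht (x 0) (mem_univ _))
    obtain ⟨m, hm, hmt⟩ := exists_pos_pow_eq_card hslice
    have hinduct : d * #A * (m⁻¹ - (2 ^ n)⁻¹) ≤ ∑ u, (#(edgeBoundary (sliceAt A u)) : ℝ) := by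
      rw [← sum_card_sliceAt A, Nat.cast_sum, mul_sum, sum_mul]
      refine sum_le_sum fun u _ => ih _ hm ?_
      rw [hmt]
      exact_mod_cast ht u (mem_univ _)
    have hbetween := sum_card_edgeBoundary_sliceAt_add_le A t
    have hamgm := succ_mul_inv_le (Nat.cast_nonneg _) hl hm hA
    rw [← hmt] at hbetween
    push_cast
    linarith

/-! ### Layer-cake decomposition -/

/- A function with largest value `a` and second largest value `b` is `min f b` plus `a - b` times
the indicator of its top level set; induct on the set of values. -/
theorem layerCake_induction {X : Type*} [Finite X] {motive : (X → ℝ) → Prop}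
    (const : ∀ c, motive fun _ => c)
    (add_indicator : ∀ f (c : ℝ) (A : Set X), 0 ≤ c → (∀ x ∈ A, ∀ y, f y ≤ f x) → motive f →
      motive (f + c • A.indicator 1)) (f : X → ℝ) : motive f := by
  suffices h : ∀ (S : Finset ℝ) (f : X → ℝ), (∀ x, f x ∈ S) → motive f from
    h (Set.finite_range f).toFinset f fun x => by simp
  intro S
  induction S using Finset.induction_on_max with
  | empty =>
    intro f hf
    convert const 0 with x
    exact absurd (hf x) (notMem_empty _)
  | insert a S hSa ih =>
    intro f hf
    rcases S.eq_empty_or_nonempty with rfl | hS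
    · convert const a with x
      simpa using hf x
    obtain ⟨b, hb, hbmax⟩ := S.exists_max_image id hS
    have hbelow : ∀ x, f x ≠ a → f x ∈ S := fun x hx => (mem_insert.1 (hf x)).resolve_left hx
    have hmin : ∀ x, f x ≠ a → min (f x) b = f x := fun x hx => min_eq_left (hbmax _ (hbelow x hx))
    have hmin_top : ∀ x, f x = a → min (f x) b = b := fun x hx => by
      rw [hx]
      exact min_eq_right (hSa b hb).le
    have hf_eq : f = (fun x => min (f x) b) + (a - b) • {x | f x = a}.indicator 1 := by
      ext x
      by_cases hx : f x = a
      · simp [hx, (hSa b hb).le]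
      · simp [hx, hmin x hx]
    rw [hf_eq]
    refine add_indicator _ _ _ (sub_nonneg.2 (hSa b hb).le) ?_ (ih _ fun x => ?_)
    · intro x hx y
      rw [hmin_top x hx]
      exact min_le_right _ _
    · by_cases hx : f x = a
      · rwa [hmin_top x hx]
      · rw [hmin x hx]
        exact hbelow x hx

/-- The total variation of `f` along the pairs in `E`, i.e. the unnormalized `ℓ¹` norm of the
discrete gradient of `f`. -/
def totalVariation {X : Type*} (E : Finset (X × X)) (f : X → ℝ) : ℝ :=
  ∑ e ∈ E, |f e.2 - f e.1|

lemma totalVariation_add_smul_indicator {X : Type*} (E : Finset (X × X)) {f : X → ℝ} {c : ℝ}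
    {A : Set X} (hc : 0 ≤ c) (hA : ∀ x ∈ A, ∀ y, f y ≤ f x) :
    totalVariation E (f + c • A.indicator 1) =
      totalVariation E f + c * totalVariation E (A.indicator 1) := by
  simp only [totalVariation, mul_sum, ← sum_add_distrib]
  refine sum_congr rfl fun ⟨u, v⟩ _ => ?_
  by_cases hu : u ∈ A <;> by_cases hv : v ∈ A <;>
    simp only [Pi.add_apply, Pi.smul_apply, smul_eq_mul, Set.indicator_of_mem,
      Set.indicator_of_notMem, hu, hv, not_false_eq_true, Pi.one_apply]
  · simp
  · have := hA u hu v
    rw [abs_of_nonpos (by linarith), abs_of_nonpos (by linarith), abs_of_neg (by norm_num)]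
    ring
  · have := hA v hv u
    rw [abs_of_nonneg (by linarith), abs_of_nonneg (by linarith), abs_of_pos (by norm_num)]
    ring
  · simp

theorem seminorm_le_totalVariation {X : Type*} [Finite X] (p : Seminorm ℝ (X → ℝ)) (hp : p 1 = 0)
    (E : Finset (X × X)) (w : ℝ)
    (hind : ∀ A : Set X, p (A.indicator 1) ≤ w * totalVariation E (A.indicator 1)) (f : X → ℝ) :
    p f ≤ w * totalVariation E f := by
  induction f using layerCake_induction with
  | const c =>
    have hc : (fun _ : X => c) = c • (1 : X → ℝ) := by
      ext
      simp
    rw [hc, map_smul_eq_mul, hp]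
    simp [totalVariation]
  | add_indicator f c A hc hA ih =>
    calc p (f + c • A.indicator 1) ≤ p f + c * p (A.indicator 1) := by
          refine (map_add_le_add p _ _).trans_eq ?_
          rw [map_smul_eq_mul, Real.norm_of_nonneg hc]
      _ ≤ w * totalVariation E f + c * (w * totalVariation E (A.indicator 1)) := by
          gcongr
          exact hind A
      _ = w * totalVariation E (f + c • A.indicator 1) := by
          rw [totalVariation_add_smul_indicator E hc hA]
          ring

lemma W11_eq_mul_totalVariation (n d : ℕ) (f : GridPt n d → ℝ) :
    W11 n d f = 2 ^ n / #(edgePairs n d) * totalVariation (edgePairs n d) f := by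
  rw [W11, totalVariation, ← mul_sum]
  ring

lemma W11_indicator {n d : ℕ} (A : Finset (GridPt n d)) :
    W11 n d ((A : Set (GridPt n d)).indicator 1) =
      2 ^ n / #(edgePairs n d) * #(edgeBoundary A) := by
  rw [W11_eq_mul_totalVariation, totalVariation, edgeBoundary, card_filter, Nat.cast_sum]
  congr 1
  refine sum_congr rfl fun e _ => ?_
  by_cases hu : e.1 ∈ A <;> by_cases hv : e.2 ∈ A <;> simp [hu, hv]

lemma W11_indicator_compl {n d : ℕ} (A : Finset (GridPt n d)) :
    W11 n d (((Aᶜ : Finset (GridPt n d)) : Set (GridPt n d)).indicator 1) =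
      W11 n d ((A : Set (GridPt n d)).indicator 1) := by
  have hboundary : edgeBoundary Aᶜ = edgeBoundary A := by
    simp only [edgeBoundary, mem_compl, not_iff_not]
  rw [W11_indicator, W11_indicator, hboundary]

lemma card_edgePairs_le (n d : ℕ) : #(edgePairs n d) ≤ d * (2 ^ n) ^ d := by
  have hcard : #(univ : Finset (Fin d × GridPt n d)) = d * (2 ^ n) ^ d := by simp
  rw [← hcard]
  refine card_le_card_of_forall_subsingleton (fun e (p : Fin d × GridPt n d) =>
    p.2 = e.1 ∧ (e.2 p.1 : ℕ) = (e.1 p.1 : ℕ) + 1 ∧ ∀ j, j ≠ p.1 → e.2 j = e.1 j) ?_ ?_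
  · intro e he
    obtain ⟨i, hi⟩ := mem_edgePairs.1 he
    exact ⟨(i, e.1), mem_univ _, rfl, hi⟩
  · rintro ⟨i, x⟩ - ⟨_, v⟩ ⟨-, rfl, hv, hv'⟩ ⟨_, w⟩ ⟨-, rfl, hw, hw'⟩
    refine Prod.ext rfl (funext fun j => ?_)
    rcases eq_or_ne j i with rfl | hj
    · exact Fin.ext (hv.trans hw.symm)
    · exact (hv' j hj).trans (hw' j hj).symm

theorem Vol_mul_le_W11_indicator {n d : ℕ} (hd : d ≠ 0) (A : Finset (GridPt n d)) {r : ℝ}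
    (hr : 0 < r) (hA : Vol n d A ≤ r ^ d) :
    Vol n d A * (r⁻¹ - 1) ≤ W11 n d ((A : Set (GridPt n d)).indicator 1) := by
  rw [Vol, pow_mul] at *
  have hcard : (#A : ℝ) ≤ (r * 2 ^ n) ^ d := by
    rw [mul_pow]
    exact (div_le_iff₀ (by positivity)).1 hA
  have hiso := mul_card_mul_le_card_edgeBoundary A (by positivity) hcard
  calc #A / (2 ^ n) ^ d * (r⁻¹ - 1)
      = 2 ^ n / (d * (2 ^ n) ^ d) * (d * #A * ((r * 2 ^ n)⁻¹ - (2 ^ n)⁻¹)) := by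
        field_simp
    _ ≤ 2 ^ n / (d * (2 ^ n) ^ d) * #(edgeBoundary A) := by gcongr
    _ ≤ W11 n d ((A : Set (GridPt n d)).indicator 1) := by
        rw [W11_indicator]
        rcases (edgePairs n d).eq_empty_or_nonempty with hE | hE
        · simp [edgeBoundary, hE]
        · have := hE.card_pos
          gcongr
          exact_mod_cast card_edgePairs_le n d

/-! ### The random measures `ν_k` -/

section Vol

variable {n d : ℕ}

lemma Vol_nonneg (A : Finset (GridPt n d)) : 0 ≤ Vol n d A := by
  unfold Vol
  positivity

lemma Vol_mono {A B : Finset (GridPt n d)} (h : A ⊆ B) : Vol n d A ≤ Vol n d B := by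
  unfold Vol
  gcongr

lemma Vol_univ : Vol n d univ = 1 := by
  simp [Vol, pow_mul]

lemma sum_Vol_singleton_inter (A B : Finset (GridPt n d)) :
    ∑ x ∈ A, Vol n d ({x} ∩ B) = Vol n d (A ∩ B) := by
  simp only [Vol, ← sum_div, ← Nat.cast_sum, singleton_inter, apply_ite card, card_singleton,
    card_empty, ← card_filter, filter_mem_eq_inter]

lemma sum_Vol_singleton (A : Finset (GridPt n d)) : ∑ x ∈ A, Vol n d {x} = Vol n d A := by
  simpa only [inter_univ] using sum_Vol_singleton_inter A univ

lemma Vol_compl (A : Finset (GridPt n d)) : Vol n d Aᶜ = 1 - Vol n d A := by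
  rw [← sum_Vol_singleton, ← sum_Vol_singleton, ← Vol_univ (n := n), ← sum_Vol_singleton univ,
    ← sum_add_sum_compl A, add_sub_cancel_left]

lemma sum_Vol_inter_cube (k : ℕ) (A : Finset (GridPt n d)) :
    ∑ j, Vol n d (A ∩ cube n d k j) = Vol n d A := by
  have hlt : ∀ t : Fin (2 ^ n), (t : ℕ) / 2 ^ (n - k) < 2 ^ k := fun t => by
    refine Nat.div_lt_of_lt_mul (t.isLt.trans_le ?_)
    rw [← pow_add]
    exact Nat.pow_le_pow_right two_pos (by omega)
  have hinter : ∀ j : CubeIdx d k,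
      A ∩ cube n d k j = {x ∈ A | (fun i => (⟨_, hlt (x i)⟩ : Fin (2 ^ k))) = j} := fun j => by
    ext x
    simp [cube, funext_iff, Fin.ext_iff]
  simp only [Vol, ← sum_div, ← Nat.cast_sum, hinter]
  rw [← card_eq_sum_card_fiberwise fun _ _ => mem_coe.2 (mem_univ _)]

lemma card_cube_le (k : ℕ) (j : CubeIdx d k) : #(cube n d k j) ≤ (2 ^ (n - k)) ^ d := by
  have hcube : cube n d k j =
      Fintype.piFinset fun i => {t : Fin (2 ^ n) | (t : ℕ) / 2 ^ (n - k) = (j i : ℕ)} := by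
    ext x
    simp [cube]
  have hinterval : ∀ m : ℕ, #{t : Fin (2 ^ n) | (t : ℕ) / 2 ^ (n - k) = m} ≤ 2 ^ (n - k) := by
    intro m
    calc #{t : Fin (2 ^ n) | (t : ℕ) / 2 ^ (n - k) = m}
        ≤ #(Ico (m * 2 ^ (n - k)) ((m + 1) * 2 ^ (n - k))) := by
          refine card_le_card_of_injOn Fin.val (fun t ht => ?_) Fin.val_injective.injOn
          have ht : (t : ℕ) / 2 ^ (n - k) = m := by simpa using ht
          rw [coe_Ico, Set.mem_Ico, ← Nat.le_div_iff_mul_le (by positivity),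
            ← Nat.div_lt_iff_lt_mul (by positivity), ht]
          exact ⟨le_rfl, m.lt_succ_self⟩
      _ = 2 ^ (n - k) := by rw [Nat.card_Ico, ← Nat.sub_mul, Nat.add_sub_cancel_left, one_mul]
  calc #(cube n d k j) ≤ ∏ _i : Fin d, 2 ^ (n - k) := by
        rw [hcube, Fintype.card_piFinset]
        exact prod_le_prod' fun i _ => hinterval _
    _ = (2 ^ (n - k)) ^ d := by simp

lemma Vol_cube_le {k : ℕ} (hk : k ≤ n) (j : CubeIdx d k) :
    Vol n d (cube n d k j) ≤ 1 / 2 ^ (k * d) := by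
  have hcard : (#(cube n d k j) : ℝ) ≤ (2 ^ (n - k)) ^ d := mod_cast card_cube_le k j
  rw [Vol, div_le_div_iff₀ (by positivity) (by positivity), one_mul]
  calc #(cube n d k j) * (2 : ℝ) ^ (k * d) ≤ (2 ^ (n - k)) ^ d * 2 ^ (k * d) := by gcongr
    _ = 2 ^ (n * d) := by rw [← pow_mul, ← pow_add, ← add_mul, Nat.sub_add_cancel hk]

end Vol

/-- The amount by which `A ∩ Q`, for `Q` the cube of index `j`, exceeds in volume what it would
have if `A` were equidistributed. It is the coefficient of `X_Q` in `ν_k(A)`, up to the factor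
`p⁻¹ 2^k`. -/
def cubeDiscrepancy (n d k : ℕ) (A : Finset (GridPt n d)) (j : CubeIdx d k) : ℝ :=
  Vol n d (A ∩ cube n d k j) - Vol n d (cube n d k j) * Vol n d A

section Discrepancy

variable {n d k : ℕ}

lemma sum_abs_cubeDiscrepancy_le (A : Finset (GridPt n d)) :
    ∑ j, |cubeDiscrepancy n d k A j| ≤ 2 * Vol n d A := by
  have hcubes : ∑ j, Vol n d (cube n d k j) = 1 := by
    simpa only [univ_inter, Vol_univ] using sum_Vol_inter_cube k (univ : Finset (GridPt n d))
  calc ∑ j, |cubeDiscrepancy n d k A j|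
      ≤ ∑ j, (Vol n d (A ∩ cube n d k j) + Vol n d (cube n d k j) * Vol n d A) := by
        refine sum_le_sum fun j _ => (abs_sub _ _).trans_eq ?_
        rw [abs_of_nonneg (Vol_nonneg _), abs_of_nonneg (mul_nonneg (Vol_nonneg _) (Vol_nonneg _))]
    _ = 2 * Vol n d A := by
        rw [sum_add_distrib, sum_Vol_inter_cube, ← sum_mul, hcubes]
        ring

lemma abs_cubeDiscrepancy_le (hk : k ≤ n) (A : Finset (GridPt n d)) (j : CubeIdx d k) :
    |cubeDiscrepancy n d k A j| ≤ 1 / 2 ^ (k * d) := by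
  have hA : Vol n d A ≤ 1 := Vol_univ (n := n) ▸ Vol_mono (subset_univ A)
  refine (abs_sub_le_of_nonneg_of_le (Vol_nonneg _) (Vol_mono inter_subset_right)
    (mul_nonneg (Vol_nonneg _) (Vol_nonneg _)) ?_).trans (Vol_cube_le hk j)
  exact mul_le_of_le_one_right (Vol_nonneg _) hA

lemma sum_sq_cubeDiscrepancy_le (hk : k ≤ n) (A : Finset (GridPt n d)) :
    ∑ j, cubeDiscrepancy n d k A j ^ 2 ≤ 2 * Vol n d A / 2 ^ (k * d) := by
  calc ∑ j, cubeDiscrepancy n d k A j ^ 2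
      ≤ ∑ j, 1 / 2 ^ (k * d) * |cubeDiscrepancy n d k A j| := by
        refine sum_le_sum fun j _ => ?_
        rw [← sq_abs, sq]
        gcongr
        exact abs_cubeDiscrepancy_le hk A j
    _ ≤ 1 / 2 ^ (k * d) * (2 * Vol n d A) := by
        rw [← mul_sum]
        gcongr
        exact sum_abs_cubeDiscrepancy_le A
    _ = 2 * Vol n d A / 2 ^ (k * d) := by ring

end Discrepancy

section NuMeas

variable {n d k : ℕ}

lemma nuMeas_eq_sum (A : Finset (GridPt n d)) (ω : CubeIdx d k → ℝ) :
    nuMeas n d k A ω = ∑ j, (pp d)⁻¹ * 2 ^ k * cubeDiscrepancy n d k A j * ω j := by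
  simp only [nuMeas, muMeas, cubeDiscrepancy, univ_inter, sum_mul, ← sum_sub_distrib]
  exact sum_congr rfl fun j _ => by ring

lemma sum_nuMeas_singleton (A : Finset (GridPt n d)) (ω : CubeIdx d k → ℝ) :
    ∑ x ∈ A, nuMeas n d k {x} ω = nuMeas n d k A ω := by
  simp only [nuMeas, muMeas, sum_sub_distrib, ← mul_sum, sum_Vol_singleton]
  rw [sum_comm]
  simp only [← mul_sum, sum_Vol_singleton_inter]

lemma sum_indicator_mul_nuMeas (A : Finset (GridPt n d)) (ω : CubeIdx d k → ℝ) :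
    ∑ x, (A : Set (GridPt n d)).indicator 1 x * nuMeas n d k {x} ω = nuMeas n d k A ω := by
  rw [← sum_nuMeas_singleton]
  simp [Set.indicator_apply]

lemma nuMeas_univ (ω : CubeIdx d k → ℝ) : nuMeas n d k univ ω = 0 := by
  rw [nuMeas, Vol_univ, mul_one, sub_self]

lemma nuMeas_compl (A : Finset (GridPt n d)) (ω : CubeIdx d k → ℝ) :
    nuMeas n d k Aᶜ ω = -nuMeas n d k A ω := by
  rw [eq_neg_iff_add_eq_zero, add_comm, ← nuMeas_univ ω, ← sum_nuMeas_singleton,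
    ← sum_nuMeas_singleton, ← sum_nuMeas_singleton, sum_add_sum_compl]

end NuMeas


section IndependentSums

open ProbabilityTheory

variable {ι : Type*} [Fintype ι] {μ : Measure ℝ} [IsProbabilityMeasure μ]

lemma integrable_sum_const_mul_eval (hμ : Integrable id μ) (b : ι → ℝ) :
    Integrable (fun ω : ι → ℝ => ∑ j, b j * ω j) (Measure.pi fun _ => μ) :=
  integrable_finsetSum _ fun j _ => (integrable_eval hμ).const_mul (b j)

theorem integral_abs_sum_const_mul_eval_le (hμ : Integrable id μ) (b : ι → ℝ) :
    ∫ ω, |∑ j, b j * ω j| ∂(Measure.pi fun _ : ι => μ) ≤ (∫ x, |x| ∂μ) * ∑ j, |b j| := by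
  have hint : ∀ j, Integrable (fun ω : ι → ℝ => |b j| * |ω j|) (Measure.pi fun _ => μ) :=
    fun j => (integrable_eval hμ).abs.const_mul |b j|
  calc ∫ ω, |∑ j, b j * ω j| ∂(Measure.pi fun _ : ι => μ)
      ≤ ∫ ω, ∑ j, |b j| * |ω j| ∂(Measure.pi fun _ : ι => μ) := by
        refine integral_mono (integrable_sum_const_mul_eval hμ b).abs
          (integrable_finsetSum _ fun j _ => hint j) fun ω => ?_
        simpa only [abs_mul] using abs_sum_le_sum_abs (fun j => b j * ω j) univ
    _ = (∫ x, |x| ∂μ) * ∑ j, |b j| := by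
        rw [integral_finsetSum _ fun j _ => hint j, mul_sum]
        refine sum_congr rfl fun j _ => ?_
        rw [integral_const_mul, integral_comp_eval (μ := fun _ : ι => μ) (i := j)
          continuous_abs.aestronglyMeasurable, mul_comm]

lemma integral_sum_const_mul_eval_eq_zero (hμ : Integrable id μ) (hmean : ∫ x, x ∂μ = 0)
    (b : ι → ℝ) : ∫ ω, ∑ j, b j * ω j ∂(Measure.pi fun _ : ι => μ) = 0 := by
  rw [integral_finsetSum _ fun j _ => (integrable_eval hμ).const_mul (b j)]
  refine sum_eq_zero fun j _ => ?_
  rw [integral_const_mul, integral_comp_eval (μ := fun _ : ι => μ) (i := j) (f := fun x => x)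
    continuous_id.aestronglyMeasurable, hmean, mul_zero]

lemma integral_sq_sum_const_mul_eval (hμ : MemLp id 2 μ) (hmean : ∫ x, x ∂μ = 0) (b : ι → ℝ) :
    ∫ ω, (∑ j, b j * ω j) ^ 2 ∂(Measure.pi fun _ : ι => μ) = (∫ x, x ^ 2 ∂μ) * ∑ j, b j ^ 2 := by
  have hint := hμ.integrable one_le_two
  rw [← variance_of_integral_eq_zero (integrable_sum_const_mul_eval hint b).aemeasurable
    (integral_sum_const_mul_eval_eq_zero hint hmean b)]
  calc Var[fun ω : ι → ℝ => ∑ j, b j * ω j; Measure.pi fun _ => μ]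
      = ∑ j, Var[fun x => b j * x; μ] := by
        refine Eq.trans ?_ (variance_sum_pi fun j => hμ.const_mul (b j))
        congr 1
        ext ω
        simp
    _ = ∑ j, b j ^ 2 * ∫ x, x ^ 2 ∂μ := sum_congr rfl fun j _ => by
        rw [variance_const_mul, variance_of_integral_eq_zero aemeasurable_id' hmean]
    _ = (∫ x, x ^ 2 ∂μ) * ∑ j, b j ^ 2 := by rw [← sum_mul, mul_comm]

theorem sq_integral_abs_sum_const_mul_eval_le (hμ : MemLp id 2 μ) (hmean : ∫ x, x ∂μ = 0)
    (b : ι → ℝ) :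
    (∫ ω, |∑ j, b j * ω j| ∂(Measure.pi fun _ : ι => μ)) ^ 2 ≤
      (∫ x, x ^ 2 ∂μ) * ∑ j, b j ^ 2 := by
  have hsum : MemLp (fun ω : ι → ℝ => ∑ j, b j * ω j) 2 (Measure.pi fun _ => μ) :=
    memLp_finsetSum _ fun j _ =>
      (hμ.comp_measurePreserving (measurePreserving_eval _ j)).const_mul (b j)
  have hvar := variance_nonneg |fun ω : ι → ℝ => ∑ j, b j * ω j| (Measure.pi fun _ => μ)
  rw [variance_eq_sub hsum.abs, sub_nonneg] at hvar
  simpa only [Pi.abs_apply, Pi.pow_apply, sq_abs, integral_sq_sum_const_mul_eval hμ hmean b]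
    using hvar

end IndependentSums

section StepMeasure

variable (d : ℕ)

lemma pp_pos : 0 < pp d := by
  unfold pp
  positivity

lemma pp_le_one : pp d ≤ 1 :=
  inv_le_one_of_one_le₀ (one_le_pow₀ one_le_two)

lemma inv_pp : (pp d)⁻¹ = 16 ^ d := by
  rw [pp, inv_inv, pow_mul]
  norm_num

lemma integrable_stepMeasure (g : ℝ → ℝ) : Integrable g (stepMeasure d) := by
  have hdirac : ∀ a, Integrable g (Measure.dirac a) := fun a => integrable_dirac enorm_lt_top
  exact (((hdirac _).smul_measure_nnreal).add_measure (hdirac _).smul_measure_nnreal).add_measure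
    (hdirac _).smul_measure_nnreal

lemma integral_stepMeasure (g : ℝ → ℝ) :
    ∫ x, g x ∂(stepMeasure d) = pp d / 2 * g 1 + pp d / 2 * g (-1) + (1 - pp d) * g 0 := by
  have hint : ∀ (c : NNReal) (a : ℝ), Integrable g (c • Measure.dirac a) := fun c a =>
    (integrable_dirac enorm_lt_top).smul_measure_nnreal
  rw [stepMeasure, integral_add_measure ((hint _ _).add_measure (hint _ _)) (hint _ _),
    integral_add_measure (hint _ _) (hint _ _)]
  simp only [integral_smul_nnreal_measure, integral_dirac, NNReal.smul_def, smul_eq_mul,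
    Real.coe_toNNReal _ (half_pos (pp_pos d)).le,
    Real.coe_toNNReal _ (sub_nonneg.2 (pp_le_one d))]

instance isProbabilityMeasure_stepMeasure : IsProbabilityMeasure (stepMeasure d) := by
  have hmass : ∫ _, (1 : ℝ) ∂(stepMeasure d) = 1 := by
    rw [integral_stepMeasure]
    ring
  rw [integral_const, smul_eq_mul, mul_one] at hmass
  exact ⟨(ENNReal.toReal_eq_one_iff _).1 hmass⟩

lemma integral_id_stepMeasure : ∫ x, x ∂(stepMeasure d) = 0 := by
  rw [integral_stepMeasure]
  ring

lemma integral_abs_stepMeasure : ∫ x, |x| ∂(stepMeasure d) = pp d := by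
  rw [integral_stepMeasure]
  norm_num

lemma integral_sq_stepMeasure : ∫ x, x ^ 2 ∂(stepMeasure d) = pp d := by
  rw [integral_stepMeasure]
  norm_num

lemma memLp_two_id_stepMeasure : MemLp id 2 (stepMeasure d) :=
  (memLp_two_iff_integrable_sq aestronglyMeasurable_id).2 (integrable_stepMeasure d _)

end StepMeasure

section Moments

variable {n d k : ℕ}

lemma integrable_nuMeas (A : Finset (GridPt n d)) :
    Integrable (nuMeas n d k A) (prodMeasure d k) := by
  simp only [funext (nuMeas_eq_sum A)]
  exact integrable_sum_const_mul_eval (integrable_stepMeasure d id) _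

lemma integral_abs_nuMeas_le (A : Finset (GridPt n d)) :
    ∫ ω, |nuMeas n d k A ω| ∂(prodMeasure d k) ≤ 2 ^ k * (2 * Vol n d A) := by
  have hpp := pp_pos d
  simp only [nuMeas_eq_sum]
  refine (integral_abs_sum_const_mul_eval_le (integrable_stepMeasure d id) _).trans ?_
  simp only [integral_abs_stepMeasure, abs_mul, ← mul_sum, abs_pow, Nat.abs_ofNat,
    abs_of_pos (inv_pos.2 hpp)]
  rw [mul_assoc, mul_inv_cancel_left₀ hpp.ne']
  gcongr
  exact sum_abs_cubeDiscrepancy_le A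

lemma sq_integral_abs_nuMeas_le (hk : k ≤ n) (A : Finset (GridPt n d)) :
    (∫ ω, |nuMeas n d k A ω| ∂(prodMeasure d k)) ^ 2 ≤
      4 ^ k * 16 ^ d * (2 * Vol n d A / 2 ^ (k * d)) := by
  have hpp := pp_pos d
  simp only [nuMeas_eq_sum]
  calc _ ≤ pp d * ∑ j, ((pp d)⁻¹ * 2 ^ k * cubeDiscrepancy n d k A j) ^ 2 := by
        rw [← integral_sq_stepMeasure]
        exact sq_integral_abs_sum_const_mul_eval_le (memLp_two_id_stepMeasure d)
          (integral_id_stepMeasure d) _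
    _ = 4 ^ k * (pp d)⁻¹ * ∑ j, cubeDiscrepancy n d k A j ^ 2 := by
        simp only [mul_pow, ← mul_sum, pow_right_comm _ k, show (2 : ℝ) ^ 2 = 4 by norm_num]
        field_simp
    _ ≤ 4 ^ k * 16 ^ d * (2 * Vol n d A / 2 ^ (k * d)) := by
        rw [inv_pp]
        gcongr
        exact sum_sq_cubeDiscrepancy_le hk A

end Moments

/-- The seminorm `f ↦ E|∫ f dν_k|`. -/
def nuSeminorm (n d k : ℕ) : Seminorm ℝ (GridPt n d → ℝ) :=
  Seminorm.of (fun f => ∫ ω, |∑ x, f x * nuMeas n d k {x} ω| ∂(prodMeasure d k))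
    (fun f g => by
      have hint : ∀ h : GridPt n d → ℝ,
          Integrable (fun ω => |∑ x, h x * nuMeas n d k {x} ω|) (prodMeasure d k) := fun h =>
        (integrable_finsetSum _ fun x _ => (integrable_nuMeas {x}).const_mul (h x)).abs
      rw [← integral_add (hint f) (hint g)]
      refine integral_mono (hint _) ((hint f).add (hint g)) fun ω => ?_
      simpa only [Pi.add_apply, add_mul, sum_add_distrib] using abs_add_le _ _)
    (fun c f => by
      simp only [Pi.smul_apply, smul_eq_mul, mul_assoc, ← mul_sum, abs_mul, integral_const_mul,
        Real.norm_eq_abs])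

lemma nuSeminorm_apply (n d k : ℕ) (f : GridPt n d → ℝ) :
    nuSeminorm n d k f = ∫ ω, |∑ x, f x * nuMeas n d k {x} ω| ∂(prodMeasure d k) :=
  rfl

lemma nuSeminorm_indicator {n d k : ℕ} (A : Finset (GridPt n d)) :
    nuSeminorm n d k ((A : Set (GridPt n d)).indicator 1) =
      ∫ ω, |nuMeas n d k A ω| ∂(prodMeasure d k) := by
  simp only [nuSeminorm_apply, sum_indicator_mul_nuMeas]

lemma nuSeminorm_one (n d k : ℕ) : nuSeminorm n d k 1 = 0 := by
  have hone : (1 : GridPt n d → ℝ) = ((univ : Finset (GridPt n d)) : Set _).indicator 1 := by simp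
  rw [hone, nuSeminorm_indicator]
  simp only [nuMeas_univ, abs_zero, integral_zero]

/-! ### Summation over scales -/

lemma sum_Icc_pow_sub_le {q : ℝ} (hq : 0 ≤ q) (hq1 : q < 1) (m n : ℕ) :
    ∑ k ∈ Icc m n, q ^ (k - m) ≤ (1 - q)⁻¹ := by
  rw [← Ico_add_one_right_eq_Icc, sum_Ico_eq_sum_range]
  simp only [Nat.add_sub_cancel_left]
  rw [← tsum_geometric_of_lt_one hq hq1]
  exact (summable_geometric_of_lt_one hq hq1).sum_le_tsum _ fun i _ => pow_nonneg hq i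

/- Once `2 ^ K * r` exceeds `16`, the factor `16 ^ d` coming from `p⁻¹` is absorbed into
`Vol n d A = r ^ d`, and the second moment decays like `2 ^ (-(d - 2) * (k - K))`; the rate `3 / 4`
is an upper bound for `1 / √2`. -/
lemma integral_abs_nuMeas_le_of_le_two_pow_mul {n d K k : ℕ} (hd : 2 ≤ d) (hk : k ≤ n)
    (hKk : K ≤ k) {A : Finset (GridPt n d)} {r : ℝ} (hA : Vol n d A = r ^ d)
    (hK : 16 ≤ 2 ^ K * r) :
    ∫ ω, |nuMeas n d k A ω| ∂(prodMeasure d k) ≤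
      2 ^ K * (2 * Vol n d A) * ((3 / 4) ^ (k - K)) ^ (d - 2) := by
  have hv := Vol_nonneg A
  refine le_of_sq_le_sq ((sq_integral_abs_nuMeas_le hk A).trans ?_) (by positivity)
  obtain ⟨i, rfl⟩ := Nat.exists_eq_add_of_le hKk
  obtain ⟨e, rfl⟩ := Nat.exists_eq_add_of_le hd
  have h16 : (16 : ℝ) ^ (2 + e) ≤ (2 ^ K) ^ (2 + e) * Vol n (2 + e) A := by
    rw [hA, ← mul_pow]
    gcongr
  have h4 : ∀ j, (4 : ℝ) ^ j = (2 ^ j) ^ 2 := fun j => by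
    rw [pow_right_comm]
    norm_num
  have hdecay : (((1 / 2) ^ i) ^ e : ℝ) ≤ (((3 / 4) ^ i) ^ e) ^ 2 := by
    rw [pow_right_comm _ e 2, pow_right_comm _ i 2]
    gcongr
    norm_num
  simp only [Nat.add_sub_cancel_left]
  calc (4 : ℝ) ^ (K + i) * 16 ^ (2 + e) *
        (2 * Vol n (2 + e) A / 2 ^ ((K + i) * (2 + e)))
      ≤ 4 ^ (K + i) * ((2 ^ K) ^ (2 + e) * Vol n (2 + e) A) *
        (2 * Vol n (2 + e) A / 2 ^ ((K + i) * (2 + e))) := by gcongr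
    _ = 4 ^ K * (2 * Vol n (2 + e) A ^ 2) * ((1 / 2) ^ i) ^ e := by
        simp only [h4, pow_mul, pow_add, mul_pow, one_div, inv_pow]
        field_simp
    _ ≤ 4 ^ K * (4 * Vol n (2 + e) A ^ 2) * (((3 / 4) ^ i) ^ e) ^ 2 := by
        gcongr
        norm_num
    _ = (2 ^ K * (2 * Vol n (2 + e) A) * ((3 / 4) ^ i) ^ e) ^ 2 := by
        rw [h4]
        ring

lemma sum_Icc_integral_abs_nuMeas_le {n d K m : ℕ} (hd : 3 ≤ d) (hKm : K ≤ m)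
    {A : Finset (GridPt n d)} {r : ℝ} (hA : Vol n d A = r ^ d) (hK : 16 ≤ 2 ^ K * r) :
    ∑ k ∈ Icc m n, ∫ ω, |nuMeas n d k A ω| ∂(prodMeasure d k) ≤
      8 * 2 ^ K * Vol n d A * ((3 / 4) ^ (m - K)) ^ (d - 2) := by
  have hv := Vol_nonneg A
  calc ∑ k ∈ Icc m n, ∫ ω, |nuMeas n d k A ω| ∂(prodMeasure d k)
      ≤ ∑ k ∈ Icc m n,
          2 ^ K * (2 * Vol n d A) * ((3 / 4) ^ (m - K)) ^ (d - 2) * (3 / 4) ^ (k - m) := by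
        refine sum_le_sum fun k hk => ?_
        obtain ⟨hmk, hkn⟩ := mem_Icc.1 hk
        refine (integral_abs_nuMeas_le_of_le_two_pow_mul (by omega) hkn (hKm.trans hmk)
          hA hK).trans ?_
        rw [mul_assoc _ (_ ^ (d - 2)), ← Nat.sub_add_sub_cancel hmk hKm, pow_add, mul_pow,
          mul_comm (_ ^ (d - 2))]
        gcongr
        exact pow_le_of_le_one (by positivity) (pow_le_one₀ (by norm_num) (by norm_num)) (by omega)
    _ ≤ 2 ^ K * (2 * Vol n d A) * ((3 / 4) ^ (m - K)) ^ (d - 2) * (1 - 3 / 4)⁻¹ := by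
        rw [← mul_sum]
        gcongr
        exact sum_Icc_pow_sub_le (by norm_num) (by norm_num) m n
    _ = 8 * 2 ^ K * Vol n d A * ((3 / 4) ^ (m - K)) ^ (d - 2) := by ring

lemma sum_range_integral_abs_nuMeas_le {n d : ℕ} (K : ℕ) (A : Finset (GridPt n d)) :
    ∑ k ∈ range K, ∫ ω, |nuMeas n d k A ω| ∂(prodMeasure d k) ≤ 2 * 2 ^ K * Vol n d A := by
  have hv := Vol_nonneg A
  calc ∑ k ∈ range K, ∫ ω, |nuMeas n d k A ω| ∂(prodMeasure d k)
      ≤ ∑ k ∈ range K, 2 ^ k * (2 * Vol n d A) := sum_le_sum fun k _ => integral_abs_nuMeas_le A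
    _ = (2 ^ K - 1) * (2 * Vol n d A) := by
        rw [← sum_mul, geom_sum_eq (by norm_num)]
        norm_num
    _ ≤ 2 * 2 ^ K * Vol n d A := by linarith

lemma sum_integral_abs_nuMeas_le {n d K : ℕ} (hd : 3 ≤ d) (m : ℕ) {A : Finset (GridPt n d)} {r : ℝ}
    (hA : Vol n d A = r ^ d) (hK : 16 ≤ 2 ^ K * r) :
    ∑ k ∈ Icc m n, ∫ ω, |nuMeas n d k A ω| ∂(prodMeasure d k) ≤ 10 * 2 ^ K * Vol n d A := by
  have hdisj : Disjoint (range K) (Icc K n) :=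
    disjoint_left.2 fun k hk hk' => (mem_range.1 hk).not_ge (mem_Icc.1 hk').1
  have hlarge := sum_Icc_integral_abs_nuMeas_le hd le_rfl hA hK
  rw [Nat.sub_self, pow_zero, one_pow, mul_one] at hlarge
  calc ∑ k ∈ Icc m n, ∫ ω, |nuMeas n d k A ω| ∂(prodMeasure d k)
      ≤ ∑ k ∈ range K ∪ Icc K n, ∫ ω, |nuMeas n d k A ω| ∂(prodMeasure d k) := by
        refine sum_le_sum_of_subset_of_nonneg (fun k hk => ?_)
          fun k _ _ => integral_nonneg fun ω => abs_nonneg _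
        have := mem_Icc.1 hk
        simp only [mem_union, mem_range, mem_Icc]
        omega
    _ ≤ 10 * 2 ^ K * Vol n d A := by
        rw [sum_union hdisj]
        linarith [sum_range_integral_abs_nuMeas_le K A]

lemma exists_two_pow_mul_mem_Icc {r : ℝ} (hr : 0 < r) (hr1 : r ≤ 1) :
    ∃ K : ℕ, 16 ≤ 2 ^ K * r ∧ 2 ^ K * r ≤ 32 := by
  obtain ⟨K, hK, hK'⟩ := exists_nat_pow_near (x := 16 / r) ((one_le_div hr).2 (by linarith))
    one_lt_two
  rw [le_div_iff₀ hr] at hK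
  rw [div_lt_iff₀ hr] at hK'
  refine ⟨K + 1, hK'.le, ?_⟩
  rw [pow_succ]
  linarith

lemma sum_integral_abs_nuMeas_le_of_le_half {n d : ℕ} (hd : 3 ≤ d) (m : ℕ)
    {A : Finset (GridPt n d)} {r : ℝ} (hr : 0 < r) (hr2 : r ≤ 1 / 2) (hA : Vol n d A = r ^ d) :
    ∑ k ∈ Icc m n, ∫ ω, |nuMeas n d k A ω| ∂(prodMeasure d k) ≤
      640 * (Vol n d A * (r⁻¹ - 1)) := by
  have hv := Vol_nonneg A
  have hr_inv : 2 ≤ r⁻¹ := by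
    rw [le_inv_comm₀ two_pos hr]
    linarith
  obtain ⟨K, hK, hK'⟩ := exists_two_pow_mul_mem_Icc hr (by linarith)
  calc ∑ k ∈ Icc m n, ∫ ω, |nuMeas n d k A ω| ∂(prodMeasure d k)
      ≤ 10 * 2 ^ K * Vol n d A := sum_integral_abs_nuMeas_le hd m hA hK
    _ ≤ 10 * (32 * r⁻¹) * Vol n d A := by
        gcongr
        rwa [← div_eq_mul_inv, le_div_iff₀ hr]
    _ ≤ 640 * (Vol n d A * (r⁻¹ - 1)) := by nlinarith

lemma mul_pow_sub_two_le {d : ℕ} (hd : 2 ≤ d) : (d : ℝ) * ((3 / 4) ^ 3) ^ (d - 2) ≤ 2 := by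
  obtain ⟨e, rfl⟩ := Nat.exists_eq_add_of_le hd
  have hlinear : ((2 + e : ℕ) : ℝ) ≤ 2 * 2 ^ e := by
    have : 2 + e ≤ 2 * 2 ^ e := by
      have := Nat.lt_two_pow_self (n := e)
      omega
    exact_mod_cast this
  calc ((2 + e : ℕ) : ℝ) * ((3 / 4) ^ 3) ^ (2 + e - 2) ≤ 2 * 2 ^ e * (1 / 2) ^ e := by
        rw [Nat.add_sub_cancel_left]
        gcongr
        norm_num
    _ = 2 := by rw [mul_assoc, ← mul_pow]; norm_num

lemma half_le_mul_inv_sub_one {d : ℕ} {r : ℝ} (hr : 0 < r) (hrd : r ^ d ≤ 1 / 2) :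
    1 / 2 ≤ d * (r⁻¹ - 1) := by
  have hr1 : r ≤ 1 := by
    by_contra! h
    linarith [one_le_pow₀ h.le (n := d)]
  have bernoulli := one_add_mul_le_pow (a := r - 1) (by linarith) d
  rw [add_sub_cancel] at bernoulli
  have hinv : 1 - r ≤ r⁻¹ - 1 := by
    rw [show 1 - r = (r⁻¹ - 1) * r by field_simp]
    exact mul_le_of_le_one_right (sub_nonneg.2 ((one_le_inv₀ hr).2 hr1)) hr1
  calc 1 / 2 ≤ d * (1 - r) := by linarith
    _ ≤ d * (r⁻¹ - 1) := by gcongr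

/- Here `r⁻¹ - 1` may be as small as `1 / (2 * d)`. This is why the sum starts at `k = 8`: the
smallest scale exceeds `K = 5` by `3`, which gains a factor exponentially small in `d`. -/
lemma sum_integral_abs_nuMeas_le_of_half_le {n d : ℕ} (hd : 3 ≤ d) {A : Finset (GridPt n d)} {r : ℝ}
    (hr2 : 1 / 2 ≤ r) (hA : Vol n d A = r ^ d) (hv2 : Vol n d A ≤ 1 / 2) :
    ∑ k ∈ Icc 8 n, ∫ ω, |nuMeas n d k A ω| ∂(prodMeasure d k) ≤
      1024 * (Vol n d A * (r⁻¹ - 1)) := by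
  have hv := Vol_nonneg A
  have hdr := half_le_mul_inv_sub_one (d := d) (r := r) (by linarith) (hA ▸ hv2)
  have hgain : 0 ≤ r⁻¹ - 1 :=
    (pos_of_mul_pos_right (one_half_pos.trans_le hdr) (Nat.cast_nonneg d)).le
  calc ∑ k ∈ Icc 8 n, ∫ ω, |nuMeas n d k A ω| ∂(prodMeasure d k)
      ≤ 8 * 2 ^ 5 * Vol n d A * ((3 / 4) ^ 3) ^ (d - 2) :=
        sum_Icc_integral_abs_nuMeas_le hd (by norm_num) hA (by linarith)
    _ ≤ 8 * 2 ^ 5 * Vol n d A * ((3 / 4) ^ 3) ^ (d - 2) * (2 * (d * (r⁻¹ - 1))) :=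
        le_mul_of_one_le_right (by positivity) (by linarith)
    _ = 512 * (Vol n d A * (r⁻¹ - 1)) * (d * ((3 / 4) ^ 3) ^ (d - 2)) := by ring
    _ ≤ 512 * (Vol n d A * (r⁻¹ - 1)) * 2 := by
        gcongr
        exact mul_pow_sub_two_le (by omega)
    _ = 1024 * (Vol n d A * (r⁻¹ - 1)) := by ring

lemma sum_integral_abs_nuMeas_le_W11_of_le_half {n d : ℕ} (hd : 3 ≤ d) {A : Finset (GridPt n d)}
    (hv2 : Vol n d A ≤ 1 / 2) :
    ∑ k ∈ Icc 8 n, ∫ ω, |nuMeas n d k A ω| ∂(prodMeasure d k) ≤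
      1024 * W11 n d ((A : Set (GridPt n d)).indicator 1) := by
  rcases A.eq_empty_or_nonempty with rfl | hA
  · simp [nuMeas, muMeas, Vol, W11]
  have hv : 0 < Vol n d A := div_pos (Nat.cast_pos.2 hA.card_pos) (by positivity)
  obtain ⟨r, hr, hAr⟩ : ∃ r : ℝ, 0 < r ∧ Vol n d A = r ^ d :=
    ⟨Vol n d A ^ (d : ℝ)⁻¹, by positivity, (Real.rpow_inv_natCast_pow hv.le (by omega)).symm⟩
  have hiso := Vol_mul_le_W11_indicator (by omega) A hr hAr.le
  rcases le_total r (1 / 2) with hr2 | hr2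
  · have hsum := sum_integral_abs_nuMeas_le_of_le_half (n := n) hd 8 hr hr2 hAr
    have hgain : 1 ≤ r⁻¹ := (one_le_inv₀ hr).2 (by linarith)
    have : 0 ≤ Vol n d A * (r⁻¹ - 1) := mul_nonneg hv.le (sub_nonneg.2 hgain)
    linarith
  · have hsum := sum_integral_abs_nuMeas_le_of_half_le hd hr2 hAr hv2
    linarith

theorem sum_integral_abs_nuMeas_le_W11 {n d : ℕ} (hd : 3 ≤ d) (A : Finset (GridPt n d)) :
    ∑ k ∈ Icc 8 n, ∫ ω, |nuMeas n d k A ω| ∂(prodMeasure d k) ≤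
      1024 * W11 n d ((A : Set (GridPt n d)).indicator 1) := by
  rcases le_total (Vol n d A) (1 / 2) with hv | hv
  · exact sum_integral_abs_nuMeas_le_W11_of_le_half hd hv
  · have hcompl := sum_integral_abs_nuMeas_le_W11_of_le_half hd (A := Aᶜ) (by
      rw [Vol_compl]
      linarith)
    simpa only [nuMeas_compl, abs_neg, W11_indicator_compl] using hcompl

/-- Sobolev inequality for the random measures `ν_k`: there is a universal constant `C`
(independent of `n, d`) with `∑_{k=8}^n E[|∫ f dν_k|] ≤ C·‖f‖_{W^{1,1}}`. Here
`∫ f dν_k = ∑_x f(x)·ν_k({x})`. -/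
theorem sobolev_inequality :
    ∃ C : ℝ, ∀ (n d : ℕ), 8 ≤ n → 3 ≤ d → ∀ f : GridPt n d → ℝ,
      ∑ k ∈ Finset.Icc 8 n,
          ∫ ω, |∑ x, f x * nuMeas n d k {x} ω| ∂(prodMeasure d k)
        ≤ C * W11 n d f := by
  refine ⟨1024, fun n d _ hd f => ?_⟩
  let p : Seminorm ℝ (GridPt n d → ℝ) := ∑ k ∈ Icc 8 n, nuSeminorm n d k
  have hp : ∀ g, p g = ∑ k ∈ Icc 8 n, nuSeminorm n d k g := fun g =>
    _root_.sum_apply _ _ g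
  have hp_one : p 1 = 0 := (hp 1).trans (sum_eq_zero fun k _ => nuSeminorm_one n d k)
  rw [W11_eq_mul_totalVariation, ← mul_assoc]
  refine (hp f).symm.trans_le (seminorm_le_totalVariation p hp_one _ _ (fun A => ?_) f)
  lift A to Finset (GridPt n d) using A.toFinite
  rw [hp, mul_assoc, ← W11_eq_mul_totalVariation]
  simpa only [nuSeminorm_indicator] using sum_integral_abs_nuMeas_le_W11 hd A
end
end

section
/- Let n, d be integers with d ≥ 3 and n ≥ 1, and let A ⊆ [2^n]^d satisfy Vol(A) ≤ 2^{−2d}. Then Vol(A)^{1−1/d} ≤ 2·Per(A). -/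
open MeasureTheory Finset

noncomputable section

/-- The edge boundary `∂A` of a subset `A` of the grid. -/
def bdry (n d : ℕ) (A : Finset (GridPt n d)) : Finset (GridPt n d × GridPt n d) :=
  (edgePairs n d).filter (fun e => (e.1 ∈ A ∧ e.2 ∉ A) ∨ (e.1 ∉ A ∧ e.2 ∈ A))

/-- The normalized perimeter `Per(A) = (1/d)·2^{-n(d-1)}·|∂A|`. -/
def Per (n d : ℕ) (A : Finset (GridPt n d)) : ℝ :=
  (1/(d:ℝ)) * ((2:ℝ)^(n*(d-1)))⁻¹ * ((bdry n d A).card : ℝ)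

/-!
By the Loomis–Whitney inequality and AM-GM, the projections of `A` along the `d` axes have total
size at least `d |A|^{1-1/d}`; Loomis–Whitney itself follows by induction on `d`, applying Hölder's
inequality to the slices over the first coordinate. Each point of the projection along axis `i` is a
line meeting `A`; such a line either contains a boundary edge or lies entirely in `A`, and at most
`|A| / 2^n` lines of each direction lie in `A`. After normalization this reads
`Vol(A)^{1-1/d} ≤ Per(A) + Vol(A)`, and the last term is at most half of the left-hand side as soon
as `Vol(A) ≤ 2^{-d}`.
-/

/-- The slice `{w | (x, w) ∈ A}` of `A` over the value `x` of the first coordinate. -/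
def headSlice {α : Type*} {d : ℕ} (A : Finset (Fin (d + 1) → α)) (x : α) : Finset (Fin d → α) :=
  A.preimage (fun w ↦ (Fin.cons x w : Fin (d + 1) → α))
    (Fin.cons_right_injective (α := fun _ ↦ α) x).injOn

/-- The projection of `A` along the `i`-th axis, as a set of points in one dimension less. -/
def projAlong {α : Type*} [DecidableEq α] {d : ℕ} (i : Fin (d + 1)) (A : Finset (Fin (d + 1) → α)) :
    Finset (Fin d → α) :=
  A.image i.removeNth

/-- The lines in direction `i` contained in `A`, each encoded by its projection along that
direction. -/
def fullLines {α : Type*} [Fintype α] [DecidableEq α] {d : ℕ} (i : Fin (d + 1))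
    (A : Finset (Fin (d + 1) → α)) : Finset (Fin d → α) :=
  {w | ∀ x, i.insertNth x w ∈ A}

/-- The boundary edges of `A` parallel to the `i`-th axis. -/
def bdryDir {n d : ℕ} (i : Fin d) (A : Finset (GridPt n d)) : Finset (GridPt n d × GridPt n d) :=
  {e ∈ bdry n d A | (e.2 i : ℕ) = e.1 i + 1}

section LoomisWhitney

open scoped ENNReal

lemma sum_prod_rpow_le_prod_sum_rpow {α ι : Type*} (s : Finset α) (t : Finset ι)
    (f : ι → α → ℝ≥0∞) {p : ι → ℝ} (hp : ∑ i ∈ t, p i = 1) (hp₀ : ∀ i ∈ t, 0 ≤ p i) :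
    ∑ x ∈ s, ∏ i ∈ t, f i x ^ p i ≤ ∏ i ∈ t, (∑ x ∈ s, f i x) ^ p i := by
  let _ : MeasurableSpace α := ⊤
  simpa [lintegral_finset] using ENNReal.lintegral_prod_norm_pow_le (μ := Measure.count.restrict s)
    t (fun i _ ↦ (measurable_from_top (f := f i)).aemeasurable) hp hp₀

variable {α : Type*} {d : ℕ}

@[simp]
lemma mem_headSlice {A : Finset (Fin (d + 1) → α)} {x : α} {w : Fin d → α} :
    w ∈ headSlice A x ↔ (Fin.cons x w : Fin (d + 1) → α) ∈ A :=
  mem_preimage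

variable [DecidableEq α]

lemma image_cons_headSlice (A : Finset (Fin (d + 1) → α)) (x : α) :
    (headSlice A x).image (Fin.cons x) = {v ∈ A | v 0 = x} := by
  ext v
  refine Fin.consCases (fun y w ↦ ?_) v
  simp only [mem_image, mem_headSlice, mem_filter, Fin.cons_zero, Fin.cons_inj]
  grind

lemma card_headSlice (A : Finset (Fin (d + 1) → α)) (x : α) :
    #(headSlice A x) = #{v ∈ A | v 0 = x} := by
  rw [← image_cons_headSlice,
    card_image_of_injective _ (Fin.cons_right_injective (α := fun _ ↦ α) x)]

lemma sum_card_headSlice (A : Finset (Fin (d + 1) → α)) (s : Finset α) :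
    ∑ x ∈ s, #(headSlice A x) = #{v ∈ A | v 0 ∈ s} := by
  simp only [card_headSlice, sum_card_fiberwise_eq_card_filter]

lemma sum_card_headSlice_image_zero (A : Finset (Fin (d + 1) → α)) :
    ∑ x ∈ A.image (· 0), #(headSlice A x) = #A := by
  rw [sum_card_headSlice, filter_true_of_mem fun _ ↦ mem_image_of_mem _]

lemma headSlice_subset_projAlong_zero (A : Finset (Fin (d + 1) → α)) (x : α) :
    headSlice A x ⊆ projAlong 0 A := fun w hw ↦
  mem_image.2 ⟨Fin.cons x w, mem_headSlice.1 hw, by simp⟩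

lemma projAlong_headSlice_subset (i : Fin (d + 1)) (A : Finset (Fin (d + 2) → α)) (x : α) :
    projAlong i (headSlice A x) ⊆ headSlice (projAlong i.succ A) x := by
  intro w hw
  obtain ⟨v, hv, rfl⟩ := mem_image.1 hw
  refine mem_headSlice.2 (mem_image.2 ⟨Fin.cons x v, mem_headSlice.1 hv, ?_⟩)
  ext j
  refine Fin.cases ?_ (fun j ↦ ?_) j <;> simp [Fin.removeNth]

lemma sum_prod_card_projAlong_headSlice_rpow_le (A : Finset (Fin (d + 2) → α)) (s : Finset α) :
    ∑ x ∈ s, ∏ i, (#(projAlong i (headSlice A x)) : ℝ≥0∞) ^ ((d + 1 : ℕ) : ℝ)⁻¹ ≤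
      ∏ i : Fin (d + 1), (#(projAlong i.succ A) : ℝ≥0∞) ^ ((d + 1 : ℕ) : ℝ)⁻¹ := by
  have hweights : ∑ _i : Fin (d + 1), ((d + 1 : ℕ) : ℝ)⁻¹ = 1 := by
    rw [sum_const, card_univ, Fintype.card_fin, nsmul_eq_mul, mul_inv_cancel₀ (by positivity)]
  refine (sum_prod_rpow_le_prod_sum_rpow s univ _ hweights fun _ _ ↦ by positivity).trans ?_
  gcongr with i
  calc ∑ x ∈ s, (#(projAlong i (headSlice A x)) : ℝ≥0∞)
      ≤ ∑ x ∈ s, (#(headSlice (projAlong i.succ A) x) : ℝ≥0∞) := by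
        gcongr with x
        exact projAlong_headSlice_subset i A x
    _ ≤ #(projAlong i.succ A) := by
        exact_mod_cast (sum_card_headSlice _ s).trans_le (card_filter_le _ _)

lemma card_headSlice_le_rpow_mul_prod_rpow {A : Finset (Fin (d + 2) → α)} {x : α}
    (hA : (headSlice A x).Nonempty →
      #(headSlice A x) ^ d ≤ ∏ i, #(projAlong i (headSlice A x))) :
    (#(headSlice A x) : ℝ≥0∞) ≤ (#(projAlong 0 A) : ℝ≥0∞) ^ ((d + 1 : ℕ) : ℝ)⁻¹ *
      ∏ i, (#(projAlong i (headSlice A x)) : ℝ≥0∞) ^ ((d + 1 : ℕ) : ℝ)⁻¹ := by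
  rcases (headSlice A x).eq_empty_or_nonempty with hempty | hne
  · simp [hempty]
  have hpow : #(headSlice A x) ^ (d + 1) ≤
      #(projAlong 0 A) * ∏ i, #(projAlong i (headSlice A x)) := by
    rw [pow_succ']
    exact Nat.mul_le_mul (card_le_card (headSlice_subset_projAlong_zero A x)) (hA hne)
  rw [ENNReal.prod_rpow_of_nonneg (by positivity), ← ENNReal.mul_rpow_of_nonneg _ _ (by positivity),
    ENNReal.le_rpow_inv_iff (by positivity), ENNReal.rpow_natCast]
  exact_mod_cast hpow

lemma card_pow_succ_le_prod_card_projAlong {A : Finset (Fin (d + 2) → α)}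
    (hA : ∀ x, (headSlice A x).Nonempty →
      #(headSlice A x) ^ d ≤ ∏ i, #(projAlong i (headSlice A x))) :
    #A ^ (d + 1) ≤ ∏ i, #(projAlong i A) := by
  have hroot : (#A : ℝ≥0∞) ≤ (∏ i, (#(projAlong i A) : ℝ≥0∞)) ^ ((d + 1 : ℕ) : ℝ)⁻¹ :=
    calc (#A : ℝ≥0∞) = ∑ x ∈ A.image (· 0), (#(headSlice A x) : ℝ≥0∞) :=
          mod_cast (sum_card_headSlice_image_zero A).symm
      _ ≤ _ := sum_le_sum fun x _ ↦ card_headSlice_le_rpow_mul_prod_rpow (hA x)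
      _ ≤ (#(projAlong 0 A) : ℝ≥0∞) ^ ((d + 1 : ℕ) : ℝ)⁻¹ *
            ∏ i : Fin (d + 1), (#(projAlong i.succ A) : ℝ≥0∞) ^ ((d + 1 : ℕ) : ℝ)⁻¹ := by
        rw [← mul_sum]
        gcongr
        exact sum_prod_card_projAlong_headSlice_rpow_le A _
      _ = _ := by
        rw [← ENNReal.prod_rpow_of_nonneg (by positivity),
          Fin.prod_univ_succ (n := d + 1)]
  rw [ENNReal.le_rpow_inv_iff (by positivity), ENNReal.rpow_natCast] at hroot
  exact_mod_cast hroot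

theorem loomis_whitney {A : Finset (Fin (d + 1) → α)} (hA : A.Nonempty) :
    #A ^ d ≤ ∏ i, #(projAlong i A) := by
  induction d with
  | zero => simpa [projAlong, Nat.one_le_iff_ne_zero] using hA.ne_empty
  | succ d ih => exact card_pow_succ_le_prod_card_projAlong fun _ ↦ ih

lemma mul_card_rpow_le_sum_card_projAlong {A : Finset (Fin (d + 1) → α)} (hA : A.Nonempty) :
    ((d + 1 : ℕ) : ℝ) * (#A : ℝ) ^ (1 - 1 / ((d + 1 : ℕ) : ℝ)) ≤
      ∑ i, (#(projAlong i A) : ℝ) := by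
  have hd : (0 : ℝ) < (d + 1 : ℕ) := by positivity
  have hamgm : (∏ i, (#(projAlong i A) : ℝ)) ^ ((d + 1 : ℕ) : ℝ)⁻¹ ≤
      (∑ i, (#(projAlong i A) : ℝ)) / (d + 1 : ℕ) := by
    simpa using Real.geom_mean_le_arith_mean univ 1 (fun i ↦ (#(projAlong i A) : ℝ))
      (by simp) (by simpa using hd) (by simp)
  rw [← le_div_iff₀' hd]
  calc (#A : ℝ) ^ (1 - 1 / ((d + 1 : ℕ) : ℝ))
      = ((#A : ℝ) ^ d) ^ ((d + 1 : ℕ) : ℝ)⁻¹ := by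
        rw [← Real.rpow_natCast_mul (by positivity)]
        congr 1
        push_cast
        field_simp
        ring
    _ ≤ (∏ i, (#(projAlong i A) : ℝ)) ^ ((d + 1 : ℕ) : ℝ)⁻¹ := by
        gcongr
        exact_mod_cast loomis_whitney hA
    _ ≤ _ := hamgm

end LoomisWhitney

lemma card_fullLines_mul_card_le {α : Type*} [Fintype α] [DecidableEq α] {d : ℕ} (i : Fin (d + 1))
    (A : Finset (Fin (d + 1) → α)) : #(fullLines i A) * Fintype.card α ≤ #A := by
  rw [← card_univ, ← card_product]
  refine card_le_card_of_injOn (fun p ↦ i.insertNth p.2 p.1) (fun p hp ↦ ?_) (fun p _ p' _ h ↦ ?_)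
  · exact (mem_filter.1 (mem_product.1 hp).1).2 p.2
  · exact Prod.ext (Fin.insertNth_injective2 h).2 (Fin.insertNth_injective2 h).1

lemma exists_succ_boundary_of_mem_of_notMem {N : ℕ} {S : Set (Fin N)} {a b : Fin N} (ha : a ∈ S)
    (hb : b ∉ S) :
    ∃ x y : Fin N, (y : ℕ) = x + 1 ∧ ((x ∈ S ∧ y ∉ S) ∨ (x ∉ S ∧ y ∈ S)) := by
  obtain ⟨walk⟩ := SimpleGraph.pathGraph_preconnected N a b
  obtain ⟨e, -, hfst, hsnd⟩ := walk.exists_boundary_dart S ha hb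
  rcases SimpleGraph.pathGraph_adj.1 e.adj with h | h
  · exact ⟨e.fst, e.snd, h.symm, .inl ⟨hfst, hsnd⟩⟩
  · exact ⟨e.snd, e.fst, h.symm, .inr ⟨hsnd, hfst⟩⟩

section Boundary

variable {n d : ℕ}

lemma insertNth_mem_bdryDir {A : Finset (GridPt n (d + 1))} {i : Fin (d + 1)} {w : GridPt n d}
    {x y : Fin (2 ^ n)} (hxy : (y : ℕ) = x + 1)
    (hA : (i.insertNth x w ∈ A ∧ i.insertNth y w ∉ A) ∨
      (i.insertNth x w ∉ A ∧ i.insertNth y w ∈ A)) :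
    ((i.insertNth x w : GridPt n (d + 1)), (i.insertNth y w : GridPt n (d + 1))) ∈
      bdryDir i A := by
  simp only [bdryDir, bdry, edgePairs, mem_filter, mem_univ, true_and, Fin.insertNth_apply_same]
  refine ⟨⟨⟨i, by simpa using hxy, fun j hj ↦ ?_⟩, hA⟩, hxy⟩
  obtain ⟨k, rfl⟩ := Fin.exists_succAbove_eq hj
  simp only [Fin.insertNth_apply_succAbove]

lemma projAlong_sdiff_fullLines_subset (i : Fin (d + 1)) (A : Finset (GridPt n (d + 1))) :
    projAlong i A \ fullLines i A ⊆ (bdryDir i A).image (fun e ↦ i.removeNth e.1) := by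
  intro w hw
  simp only [projAlong, fullLines, mem_sdiff, mem_image, mem_filter, mem_univ, true_and,
    not_forall] at hw
  obtain ⟨⟨v, hv, rfl⟩, b, hb⟩ := hw
  have hv' : i.insertNth (v i) (i.removeNth v) ∈ A := by rwa [Fin.insertNth_self_removeNth]
  obtain ⟨x, y, hxy, hcross⟩ :=
    exists_succ_boundary_of_mem_of_notMem (S := {x | i.insertNth x (i.removeNth v) ∈ A}) hv' hb
  exact mem_image.2 ⟨_, insertNth_mem_bdryDir hxy hcross, Fin.removeNth_insertNth ..⟩

lemma card_projAlong_le_card_bdryDir_add_card_fullLines (i : Fin (d + 1))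
    (A : Finset (GridPt n (d + 1))) : #(projAlong i A) ≤ #(bdryDir i A) + #(fullLines i A) :=
  calc #(projAlong i A) ≤ #(projAlong i A \ fullLines i A) + #(fullLines i A) :=
        card_le_card_sdiff_add_card
    _ ≤ #(bdryDir i A) + #(fullLines i A) := by
        gcongr
        exact (card_le_card (projAlong_sdiff_fullLines_subset i A)).trans card_image_le

lemma pairwise_disjoint_bdryDir (A : Finset (GridPt n d)) :
    Pairwise (Function.onFun Disjoint fun i ↦ bdryDir i A) := by
  intro i j hij
  refine disjoint_left.2 fun e hi hj ↦ ?_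
  simp only [bdryDir, bdry, edgePairs, mem_filter, mem_univ, true_and] at hi hj
  obtain ⟨⟨⟨k, -, hk⟩, -⟩, hi⟩ := hi
  have heq_of_step {l : Fin d} (hl : (e.2 l : ℕ) = e.1 l + 1) : l = k := by
    by_contra hlk
    rw [hk l hlk] at hl
    lia
  exact hij ((heq_of_step hi).trans (heq_of_step hj.2).symm)

lemma sum_card_bdryDir_le (A : Finset (GridPt n d)) : ∑ i, #(bdryDir i A) ≤ #(bdry n d A) := by
  rw [← card_biUnion fun i _ j _ hij ↦ pairwise_disjoint_bdryDir A hij]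
  exact card_le_card (biUnion_subset.2 fun i _ ↦ filter_subset _ _)

lemma sum_card_projAlong_le (A : Finset (GridPt n (d + 1))) :
    ∑ i, (#(projAlong i A) : ℝ) ≤ #(bdry n (d + 1) A) + (d + 1 : ℕ) * (#A / 2 ^ n : ℝ) := by
  have hfull (i : Fin (d + 1)) : (#(fullLines i A) : ℝ) ≤ #A / 2 ^ n := by
    rw [le_div_iff₀ (by positivity)]
    exact_mod_cast Fintype.card_fin (2 ^ n) ▸ card_fullLines_mul_card_le i A
  have hproj (i : Fin (d + 1)) : (#(projAlong i A) : ℝ) ≤ #(bdryDir i A) + #(fullLines i A) :=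
    mod_cast card_projAlong_le_card_bdryDir_add_card_fullLines i A
  calc ∑ i, (#(projAlong i A) : ℝ) ≤ ∑ i, ((#(bdryDir i A) : ℝ) + #A / 2 ^ n) :=
        sum_le_sum fun i _ ↦ (hproj i).trans (by gcongr; exact hfull i)
    _ = (∑ i, #(bdryDir i A) : ℕ) + (d + 1 : ℕ) * (#A / 2 ^ n : ℝ) := by
        simp [sum_add_distrib]
    _ ≤ _ := by
        gcongr
        exact sum_card_bdryDir_le A

lemma vol_rpow_le_per_add_vol {A : Finset (GridPt n (d + 1))} (hA : A.Nonempty) :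
    Vol n (d + 1) A ^ (1 - 1 / ((d + 1 : ℕ) : ℝ)) ≤ Per n (d + 1) A + Vol n (d + 1) A := by
  have hscale : ((2 : ℝ) ^ (n * (d + 1))) ^ (1 - 1 / ((d + 1 : ℕ) : ℝ)) = 2 ^ (n * d) := by
    rw [← Real.rpow_natCast, ← Real.rpow_mul zero_le_two, ← Real.rpow_natCast]
    congr 1
    push_cast
    field_simp
    ring
  calc Vol n (d + 1) A ^ (1 - 1 / ((d + 1 : ℕ) : ℝ))
      = (#A : ℝ) ^ (1 - 1 / ((d + 1 : ℕ) : ℝ)) / 2 ^ (n * d) := by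
        rw [Vol, Real.div_rpow (by positivity) (by positivity), hscale]
    _ ≤ ((#(bdry n (d + 1) A) + (d + 1 : ℕ) * (#A / 2 ^ n : ℝ)) / (d + 1 : ℕ)) / 2 ^ (n * d) := by
        gcongr
        rw [le_div_iff₀' (by positivity)]
        exact (mul_card_rpow_le_sum_card_projAlong hA).trans (sum_card_projAlong_le A)
    _ = Per n (d + 1) A + Vol n (d + 1) A := by
        rw [Per, Vol, Nat.add_sub_cancel, mul_add_one n d, pow_add]
        field_simp

end Boundary

lemma le_mul_rpow_one_sub_one_div {x c : ℝ} {d : ℕ} (hx : 0 ≤ x) (hc : 0 ≤ c) (hd : d ≠ 0)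
    (hxc : x ≤ c ^ d) : x ≤ c * x ^ (1 - 1 / (d : ℝ)) := by
  have hroot : x ^ (1 / (d : ℝ)) ≤ c := by
    rwa [one_div, Real.rpow_inv_le_iff_of_pos hx hc (by positivity), Real.rpow_natCast]
  calc x = x ^ (1 / (d : ℝ)) * x ^ (1 - 1 / (d : ℝ)) := by
        rw [← Real.rpow_add' hx (by simp), add_sub_cancel, Real.rpow_one]
    _ ≤ c * x ^ (1 - 1 / (d : ℝ)) := by gcongr

theorem isoperimetric_small_general (n d : ℕ) (hd : 2 ≤ d) (A : Finset (GridPt n d))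
    (hA : Vol n d A ≤ ((2 : ℝ) ^ d)⁻¹) :
    Vol n d A ^ ((1 : ℝ) - 1 / (d : ℝ)) ≤ 2 * Per n d A := by
  obtain ⟨m, rfl⟩ : ∃ m, d = m + 1 := ⟨d - 1, by lia⟩
  rcases A.eq_empty_or_nonempty with rfl | hne
  · have hexp : (1 : ℝ) - 1 / (m + 1 : ℕ) ≠ 0 :=
      (sub_pos.2 ((div_lt_one (by positivity)).2 (mod_cast hd))).ne'
    rw [Vol, card_empty, Nat.cast_zero, zero_div, Real.zero_rpow hexp, Per]
    positivity
  · rw [← inv_pow] at hA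
    have hvol := le_mul_rpow_one_sub_one_div (by unfold Vol; positivity) (by norm_num)
      m.succ_ne_zero hA
    linarith [vol_rpow_le_per_add_vol hne]

/-- Isoperimetric inequality, small sets: if `Vol(A) ≤ 2^{-2d}` then
`Vol(A)^{1-1/d} ≤ 2·Per(A)`. -/
theorem isoperimetric_small (n d : ℕ) (hn : 1 ≤ n) (hd : 3 ≤ d)
    (A : Finset (GridPt n d)) (hA : Vol n d A ≤ ((2:ℝ)^(2*d))⁻¹) :
    Vol n d A ^ ((1:ℝ) - 1/(d:ℝ)) ≤ 2 * Per n d A := by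
  exact isoperimetric_small_general n d (by lia) A (hA.trans (by gcongr <;> norm_num; lia))
end
end
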